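/- arXiv:2302.04136 — 2 statements merged into one kernel-verified Lean document; each statement's English description precedes it below -/
import Mathlib

section
/- Let τ be a decorated permutation of {1,…,n} possessing at least one undecorated letter, with dec(τ) decorations, and let 1 ≤ k ≤ n+1. Then dec(δ_k(τ)) = dec(τ) + 1 if k > n+1−a(τ), and dec(δ_k(τ)) = dec(τ) if k ≤ n+1−a(τ). Moreover a(δ_k(τ)) = k if k ≤ n+1−a(τ), and a(δ_k(τ)) = k + a(τ) − (n+1) if k > n+1−a(τ). -/
/-!
Apart from position `1`, the decorations of `δ_k(τ)` are those of `τ` moved one place to the right.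
Counting position `1` separately gives `dec(δ_k(τ))` (`decCount_deltaDec`).

For the attribute, recall that the first entry of `k + τ` is `k`, because `τ₀ = 0`. If
`k ≤ n+1-a(τ)`, position `1` is undecorated and hence holds the first undecorated letter, `k`.
If `k > n+1-a(τ)`, position `1` is decorated, so the first undecorated letter of `δ_k(τ)` is the
image of the first undecorated letter `a(τ)` of `τ`. It is the representative of `k + a(τ)` modulo
`n+1`, and as `n+1 < k + a(τ) ≤ 2n+1` this is `k + a(τ) - (n+1)` (`shiftEnt_succ`).
-/

open Finset

namespace QEuler

/-! ### Entries of a permutation of `{1,…,n}`, with the convention `σ₀ = 0`.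
A permutation `σ ∈ S_n` is represented by `Equiv.Perm (Fin n)`; its entry at
position `i ∈ {1,…,n}` is `(σ (i-1)).val + 1 ∈ {1,…,n}`, and all other
positions (in particular position `0`) carry the value `0`. -/

def ent {n : ℕ} (σ : Equiv.Perm (Fin n)) (i : ℕ) : ℕ :=
  if h : 1 ≤ i ∧ i ≤ n then ((σ ⟨i - 1, by omega⟩ : Fin n) : ℕ) + 1 else 0

/-- Decorations: a set `D : Finset (Fin n)` records the decorated positions,
`j : Fin n` encoding position `j+1 ∈ {1,…,n}`.  `isDec D i` tells whether
position `i` is decorated (position `0` never is). -/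
def isDec {n : ℕ} (D : Finset (Fin n)) (i : ℕ) : Bool :=
  if h : 1 ≤ i ∧ i ≤ n then decide ((⟨i - 1, by omega⟩ : Fin n) ∈ D) else false

/-- Number of decorated positions among `{1,…,n}` for a decoration predicate. -/
def decCount (n : ℕ) (D : ℕ → Bool) : ℕ :=
  ((Finset.Icc 1 n).filter fun i => D i = true).card

/-! ### Major index and reverse major index -/

/-- Major index of the word `E 1, E 2, …, E n`. -/
def maj (n : ℕ) (E : ℕ → ℕ) : ℕ :=
  ∑ i ∈ Finset.Icc 1 (n - 1), if E (i + 1) < E i then i else 0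

/-- Reverse major index: the major index of the reversed word `E n, …, E 1`. -/
def revmaj (n : ℕ) (E : ℕ → ℕ) : ℕ := maj n fun i => E (n + 1 - i)

/-! ### Decreasing runs and schedule numbers -/

/-- The word is strictly decreasing along consecutive positions `p,…,q`. -/
def decOn (E : ℕ → ℕ) (p q : ℕ) : Prop := ∀ t ∈ Finset.Ico p q, E (t + 1) < E t

instance (E : ℕ → ℕ) (p q : ℕ) : Decidable (decOn E p q) := by
  unfold decOn; infer_instance

/-- Start of the maximal strictly decreasing consecutive run containing position `i`. -/
def runStart (E : ℕ → ℕ) (i : ℕ) : ℕ :=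
  Nat.find (show ∃ p, decOn E p i from ⟨i, fun t ht => absurd ht (by simp)⟩)

/-- End of the maximal strictly decreasing consecutive run containing position `i`
(positions are `0,…,n`). -/
def runEnd (n : ℕ) (E : ℕ → ℕ) (i : ℕ) : ℕ :=
  Nat.findGreatest (fun q => decOn E i q) n

/-- The schedule number of a decorated permutation (given by its entry word `E` on
positions `0,…,n`, with `E 0 = 0`, and decoration predicate `D`) at position `i`.
If `σ_i` is undecorated and lies in run `r_j` it counts the undecorated entries of `r_j`
larger than `σ_i` plus the undecorated entries of `r_{j-1}` smaller than `σ_i`;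
if `σ_i` is decorated it counts the undecorated entries of `r_j` smaller than `σ_i`
plus the undecorated entries of `r_{j+1}` larger than `σ_i`. -/
def schedNum (n : ℕ) (E : ℕ → ℕ) (D : ℕ → Bool) (i : ℕ) : ℕ :=
  if D i = true then
    ((Finset.Icc (runStart E i) (runEnd n E i)).filter fun t => D t = false ∧ E t < E i).card
      + (if runEnd n E i < n then
          ((Finset.Icc (runEnd n E i + 1) (runEnd n E (runEnd n E i + 1))).filter
            fun t => D t = false ∧ E i < E t).card
        else 0)
  else
    ((Finset.Icc (runStart E i) (runEnd n E i)).filter fun t => D t = false ∧ E i < E t).card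
      + (if runStart E i = 0 then 0 else
          ((Finset.Icc (runStart E (runStart E i - 1)) (runStart E i - 1)).filter
            fun t => D t = false ∧ E t < E i).card)

/-! ### Cyclic runs -/

/-- `σ_i,…,σ_j` is a cyclic (decreasing) run: for some shift `k`, the residues
`σ_t + k (mod n+1)` are strictly decreasing for `t = i,…,j`. -/
def IsCyclicRun (n : ℕ) (E : ℕ → ℕ) (i j : ℕ) : Prop :=
  i ≤ j ∧ j ≤ n ∧ ∃ k : ℕ, ∀ t ∈ Finset.Ico i j, (E (t + 1) + k) % (n + 1) < (E t + k) % (n + 1)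

/-- A cyclic run which cannot be extended to the left. -/
def LeftMaximalRun (n : ℕ) (E : ℕ → ℕ) (i j : ℕ) : Prop :=
  IsCyclicRun n E i j ∧ (i = 0 ∨ ¬ IsCyclicRun n E (i - 1) j)

/-- A cyclic run which cannot be extended to the right. -/
def RightMaximalRun (n : ℕ) (E : ℕ → ℕ) (i j : ℕ) : Prop :=
  IsCyclicRun n E i j ∧ (j = n ∨ ¬ IsCyclicRun n E i (j + 1))

/-! ### Double ascents, descents, peaks, valleys; `inv3` and `monot` -/

def DblAsc (E : ℕ → ℕ) (j : ℕ) : Prop := E (j - 2) < E (j - 1) ∧ E (j - 1) < E j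
def DblDesc (E : ℕ → ℕ) (j : ℕ) : Prop := E (j - 1) < E (j - 2) ∧ E j < E (j - 1)
def IsPeak (E : ℕ → ℕ) (j : ℕ) : Prop := E (j - 2) < E (j - 1) ∧ E j < E (j - 1)
def IsValley (E : ℕ → ℕ) (j : ℕ) : Prop := E (j - 1) < E (j - 2) ∧ E (j - 1) < E j

instance (E : ℕ → ℕ) (j : ℕ) : Decidable (DblAsc E j) := by unfold DblAsc; infer_instance
instance (E : ℕ → ℕ) (j : ℕ) : Decidable (DblDesc E j) := by unfold DblDesc; infer_instance
instance (E : ℕ → ℕ) (j : ℕ) : Decidable (IsPeak E j) := by unfold IsPeak; infer_instance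
instance (E : ℕ → ℕ) (j : ℕ) : Decidable (IsValley E j) := by unfold IsValley; infer_instance

/-- `(i,j)` is a 3-inversion. -/
def Inv3Pair (E : ℕ → ℕ) (i j : ℕ) : Prop :=
  (DblAsc E j ∧ E (j - 1) < E i ∧ E i < E j) ∨
  (DblDesc E j ∧ E j < E i ∧ E i < E (j - 1)) ∨
  (IsPeak E j ∧ E j < E i) ∨
  (IsValley E j ∧ E i < E j)

instance (E : ℕ → ℕ) (i j : ℕ) : Decidable (Inv3Pair E i j) := by
  unfold Inv3Pair; infer_instance

/-- Number of 3-inversions of the word `E 1, …, E n` (with the convention `E 0 = 0`). -/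
def inv3 (n : ℕ) (E : ℕ → ℕ) : ℕ :=
  ((Finset.Icc 1 n ×ˢ Finset.Icc 1 n).filter fun p => p.1 < p.2 ∧ Inv3Pair E p.1 p.2).card

/-- Number of double ascents and double descents. -/
def monot (n : ℕ) (E : ℕ → ℕ) : ℕ :=
  ((Finset.Icc 2 n).filter fun j => DblAsc E j ∨ DblDesc E j).card

/-! ### Alternating permutations, `31-2` patterns and Chebikin's statistic -/

/-- `σ₁ > σ₂ < σ₃ > ⋯`. -/
def IsAlternating (n : ℕ) (E : ℕ → ℕ) : Prop :=
  ∀ i ∈ Finset.Icc 1 (n - 1), if Odd i then E (i + 1) < E i else E i < E (i + 1)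

instance (n : ℕ) (E : ℕ → ℕ) : Decidable (IsAlternating n E) := by
  unfold IsAlternating; infer_instance

/-- The finset of alternating permutations of `{1,…,n}`. -/
def altPerms (n : ℕ) : Finset (Equiv.Perm (Fin n)) :=
  Finset.univ.filter fun σ => IsAlternating n (ent σ)

/-- Number of `31-2` patterns: pairs `(i,j)` with `i+1 < j ≤ n` and `σ_j > σ_i > σ_{i+1}`. -/
def pat312 (n : ℕ) (E : ℕ → ℕ) : ℕ :=
  ((Finset.Icc 1 n ×ˢ Finset.Icc 1 n).filter fun p =>
    p.1 + 1 < p.2 ∧ E (p.1 + 1) < E p.1 ∧ E p.1 < E p.2).card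

/-- Chebikin's alternating inversion statistic `î`. -/
def chebi (n : ℕ) (E : ℕ → ℕ) : ℕ :=
  ∑ i ∈ Finset.Icc 1 (n - 1),
    ((Finset.Icc (i + 1) n).filter fun j => if Odd i then E j < E i else E i < E j).card

/-! ### Insertion `η_l`, structural attribute `ã`, the shift `k + τ` and `δ_k` -/

/-- The entry word of the insertion `η_l(σ) ∈ S_{n+1}` of the value `l` at the end of `σ ∈ S_n`. -/
def etaEnt (n l : ℕ) (E : ℕ → ℕ) (i : ℕ) : ℕ :=
  if i = n + 1 then l
  else if 1 ≤ i ∧ i ≤ n then (if l ≤ E i then E i + 1 else E i) else 0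

/-- Structural attribute `ã(σ)` of `σ ∈ S_n`. -/
def atil (n : ℕ) (E : ℕ → ℕ) : ℕ :=
  if E (n - 1) < E n then n + 1 - E n else E n

/-- The entry word of `k + τ ∈ S_{n+1}` for `τ ∈ S_n`:
`σ₀ = 0` and `σ_{i+1}` is the representative of `k + τ_i (mod n+1)` in `{1,…,n+1}`. -/
def shiftEnt (n k : ℕ) (E : ℕ → ℕ) (i : ℕ) : ℕ :=
  if i = 0 then 0
  else if (k + E (i - 1)) % (n + 1) = 0 then n + 1 else (k + E (i - 1)) % (n + 1)

/-- Position of the first (leftmost, among `1,…,n`) undecorated letter;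
equals `n+1` if every position is decorated. -/
def firstUndecPos (n : ℕ) (D : ℕ → Bool) : ℕ :=
  Nat.find (show ∃ i, n < i ∨ (1 ≤ i ∧ D i = false) from ⟨n + 1, Or.inl (by omega)⟩)

/-- `a(τ)`: the value of the first undecorated letter of `τ`. -/
def aVal (n : ℕ) (E : ℕ → ℕ) (D : ℕ → Bool) : ℕ := E (firstUndecPos n D)

/-- Decorations of the `k`-th descendant `δ_k(τ)`: position `1` is decorated iff
`k > n+1-a(τ)`, and for `i ≥ 2` position `i` is decorated iff position `i-1` of `τ` is. -/
def deltaDec (n k : ℕ) (D : ℕ → Bool) (aval : ℕ) (i : ℕ) : Bool :=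
  if i = 0 then false
  else if i = 1 then decide (n + 1 - aval < k)
  else D (i - 1)

/-! ### Valley-decorated standardly labelled Dyck paths

A path of size `n` is encoded by its area word `a : Fin n → Fin n`
(`a i` = number of whole squares between the `(i+1)`-st north step and the diagonal;
a word `a₁ ⋯ a_n` is the area word of a Dyck path iff `a₁ = 0` and `a_i ≤ a_{i-1} + 1`),
its labelling `w : Equiv.Perm (Fin n)`, and its decoration set `dv : Finset (Fin n)`
(`j` encoding the position `j+1`). -/

abbrev PathData (n : ℕ) := (Fin n → Fin n) × Equiv.Perm (Fin n) × Finset (Fin n)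

/-- The area word, on positions `1,…,n`. -/
def aw {n : ℕ} (P : PathData n) (i : ℕ) : ℕ :=
  if h : 1 ≤ i ∧ i ≤ n then ((P.1 ⟨i - 1, by omega⟩ : Fin n) : ℕ) else 0

/-- The labels, on positions `1,…,n`. -/
def lbl {n : ℕ} (P : PathData n) (i : ℕ) : ℕ := ent P.2.1 i

/-- Whether the `i`-th north step is decorated. -/
def pdec {n : ℕ} (P : PathData n) (i : ℕ) : Bool := isDec P.2.2 i

/-- The `i`-th north step is a contractible valley: `a_{i-1} > a_i`, or
`a_{i-1} = a_i` and `w_{i-1} < w_i`. -/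
def ContractibleValley {n : ℕ} (P : PathData n) (i : ℕ) : Prop :=
  2 ≤ i ∧ i ≤ n ∧ (aw P i < aw P (i - 1) ∨ (aw P (i - 1) = aw P i ∧ lbl P (i - 1) < lbl P i))

instance {n : ℕ} (P : PathData n) (i : ℕ) : Decidable (ContractibleValley P i) := by
  unfold ContractibleValley; infer_instance

/-- `P` encodes a genuine valley-decorated standardly labelled Dyck path:
the area word is valid, labels in a common column increase from bottom to top
(equivalently, consecutive north steps carry increasing labels), and every
decoration sits on a contractible valley. -/
def IsValidPath {n : ℕ} (P : PathData n) : Prop :=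
  (1 ≤ n → aw P 1 = 0) ∧
  (∀ i ∈ Finset.Icc 2 n, aw P i ≤ aw P (i - 1) + 1) ∧
  (∀ i ∈ Finset.Icc 2 n, aw P i = aw P (i - 1) + 1 → lbl P (i - 1) < lbl P i) ∧
  (∀ i ∈ Finset.Icc 1 n, pdec P i = true → ContractibleValley P i)

instance {n : ℕ} (P : PathData n) : Decidable (IsValidPath P) := by
  unfold IsValidPath; infer_instance

/-- The finset `stLD(n)^{•k}` of valley-decorated standardly labelled Dyck paths
of size `n` with exactly `k` decorated (contractible) valleys. -/
def stLD (n k : ℕ) : Finset (PathData n) :=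
  Finset.univ.filter fun P => IsValidPath P ∧ P.2.2.card = k

/-- The area statistic. -/
def area {n : ℕ} (P : PathData n) : ℕ := ∑ i ∈ Finset.Icc 1 n, aw P i

/-- `(i,j)` is a primary diagonal inversion. -/
def PrimaryDinv {n : ℕ} (P : PathData n) (i j : ℕ) : Prop :=
  aw P i = aw P j ∧ lbl P i < lbl P j ∧ pdec P i = false

/-- `(i,j)` is a secondary diagonal inversion. -/
def SecondaryDinv {n : ℕ} (P : PathData n) (i j : ℕ) : Prop :=
  aw P i = aw P j + 1 ∧ lbl P j < lbl P i ∧ pdec P i = false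

instance {n : ℕ} (P : PathData n) (i j : ℕ) : Decidable (PrimaryDinv P i j) := by
  unfold PrimaryDinv; infer_instance
instance {n : ℕ} (P : PathData n) (i j : ℕ) : Decidable (SecondaryDinv P i j) := by
  unfold SecondaryDinv; infer_instance

/-- The set of diagonal-inversion pairs `(i,j)`, `1 ≤ i < j ≤ n`. -/
def dinvPairs {n : ℕ} (P : PathData n) : Finset (ℕ × ℕ) :=
  (Finset.Icc 1 n ×ˢ Finset.Icc 1 n).filter fun p =>
    p.1 < p.2 ∧ (PrimaryDinv P p.1 p.2 ∨ SecondaryDinv P p.1 p.2)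

/-- `dinv(P)`: number of primary and secondary diagonal inversions minus the
number of decorated valleys (a nonnegative quantity). -/
def dinv {n : ℕ} (P : PathData n) : ℕ := (dinvPairs P).card - P.2.2.card

/-! ### The diagonal word of a path -/

/-- Position in the diagonal word of the label of the `i`-th north step:
labels are listed diagonal by diagonal, and within a diagonal in decreasing order. -/
def dwPos {n : ℕ} (P : PathData n) (i : ℕ) : ℕ :=
  ((Finset.Icc 1 n).filter fun i' =>
    aw P i' < aw P i ∨ (aw P i' = aw P i ∧ lbl P i ≤ lbl P i')).card

/-- The `j`-th letter of the diagonal word `dw(P)`. -/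
def dwEnt {n : ℕ} (P : PathData n) (j : ℕ) : ℕ :=
  ∑ i ∈ (Finset.Icc 1 n).filter (fun i => dwPos P i = j), lbl P i

/-- Whether the `j`-th letter of the diagonal word is decorated. -/
def dwDec {n : ℕ} (P : PathData n) (j : ℕ) : Bool :=
  decide (((Finset.Icc 1 n).filter fun i => dwPos P i = j ∧ pdec P i = true).Nonempty)

end QEuler

namespace QEuler

/-- All schedule numbers of the decorated permutation equal `1`. -/
def HasSchedOne (n : ℕ) (E : ℕ → ℕ) (D : ℕ → Bool) : Prop :=
  ∀ i ∈ Finset.Icc 1 n, schedNum n E D i = 1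

instance (n : ℕ) (E : ℕ → ℕ) (D : ℕ → Bool) : Decidable (HasSchedOne n E D) := by
  unfold HasSchedOne; infer_instance

/-- The diagonal word of `P` is the decorated permutation `(σ, D)`. -/
def DwEq {n : ℕ} (P : PathData n) (σ : Equiv.Perm (Fin n)) (D : Finset (Fin n)) : Prop :=
  (∀ j ∈ Finset.Icc 1 n, dwEnt P j = ent σ j) ∧ ∀ j ∈ Finset.Icc 1 n, dwDec P j = isDec D j

instance {n : ℕ} (P : PathData n) (σ : Equiv.Perm (Fin n)) (D : Finset (Fin n)) :
    Decidable (DwEq P σ D) := by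
  unfold DwEq; infer_instance

end QEuler

open QEuler

namespace QEuler

lemma firstUndecPos_eq {n p : ℕ} {D : ℕ → Bool} (h1 : 1 ≤ p) (hn : p ≤ n) (hp : D p = false)
    (hlt : ∀ i, 1 ≤ i → i < p → D i = true) : firstUndecPos n D = p := by
  unfold firstUndecPos
  rw [Nat.find_eq_iff]
  refine ⟨Or.inr ⟨h1, hp⟩, fun i hi h => ?_⟩
  rcases h with h | ⟨h, h'⟩
  · omega
  · simp [hlt i h hi] at h'

lemma firstUndecPos_spec {n : ℕ} {D : ℕ → Bool} (h : ∃ i, 1 ≤ i ∧ i ≤ n ∧ D i = false) :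
    1 ≤ firstUndecPos n D ∧ firstUndecPos n D ≤ n ∧ D (firstUndecPos n D) = false ∧
      ∀ i, 1 ≤ i → i < firstUndecPos n D → D i = true := by
  have hex : ∃ i, n < i ∨ (1 ≤ i ∧ D i = false) := ⟨n + 1, Or.inl (by omega)⟩
  have hle : firstUndecPos n D ≤ n := by
    obtain ⟨i, h1, hn, hi⟩ := h
    exact (Nat.find_min' hex (Or.inr ⟨h1, hi⟩)).trans hn
  have hs : n < firstUndecPos n D ∨ (1 ≤ firstUndecPos n D ∧ D (firstUndecPos n D) = false) :=
    Nat.find_spec hex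
  obtain ⟨h1, hD⟩ := hs.resolve_left (by omega)
  refine ⟨h1, hle, hD, fun i hi hlt => ?_⟩
  by_contra hne
  exact Nat.find_min hex hlt (Or.inr ⟨hi, by simpa using hne⟩)

/-- Splitting off position `1`: the remaining decorations of `δ_k(τ)` are those of `τ`,
moved one position to the right. -/
lemma decCount_deltaDec (n k a : ℕ) (D : ℕ → Bool) :
    decCount (n + 1) (deltaDec n k D a) = (if n + 1 - a < k then 1 else 0) + decCount n D := by
  simp only [decCount, Finset.card_filter, ← Finset.Ico_add_one_right_eq_Icc]
  rw [Finset.sum_eq_sum_Ico_succ_bot (by omega)]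
  congr 1
  · simp [deltaDec]
  · rw [← Finset.sum_Ico_add' _ 1 (n + 1) 1]
    refine Finset.sum_congr rfl fun i hi => ?_
    have hi1 : i ≠ 0 := by have := Finset.mem_Ico.mp hi; omega
    simp [deltaDec, hi1]

/-- For a residue in the range `1,…,2n+1`, the representative modulo `n+1` in `{1,…,n+1}` is
obtained by subtracting `n+1` at most once. -/
lemma shiftEnt_succ {n k : ℕ} {E : ℕ → ℕ} {i : ℕ} (hk1 : 1 ≤ k) (hk2 : k ≤ n + 1)
    (hE : E i ≤ n) :
    shiftEnt n k E (i + 1) = if k + E i ≤ n + 1 then k + E i else k + E i - (n + 1) := by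
  simp only [shiftEnt, Nat.add_sub_cancel, Nat.add_eq_zero_iff, one_ne_zero, and_false, if_false]
  rcases lt_trichotomy (k + E i) (n + 1) with h | h | h
  · rw [Nat.mod_eq_of_lt h, if_neg (by omega), if_pos h.le]
  · simp [h]
  · rw [Nat.mod_eq_sub_mod h.le, Nat.mod_eq_of_lt (by omega), if_neg (by omega),
      if_neg (by omega)]

lemma ent_le {n : ℕ} (σ : Equiv.Perm (Fin n)) (i : ℕ) : ent σ i ≤ n := by
  unfold ent
  split_ifs
  · exact Fin.is_lt _
  · exact Nat.zero_le n

end QEuler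

/-- For a decorated permutation `τ` of `{1,…,n}` with at least one
undecorated letter and `1 ≤ k ≤ n+1`:
`dec(δ_k(τ)) = dec(τ) + 1` if `k > n+1−a(τ)` and `dec(δ_k(τ)) = dec(τ)` otherwise;
moreover `a(δ_k(τ)) = k` if `k ≤ n+1−a(τ)`, and `a(δ_k(τ)) = k + a(τ) − (n+1)` if
`k > n+1−a(τ)`. -/
theorem dec_and_attribute_of_delta {n : ℕ} (τ : Equiv.Perm (Fin n)) (D : Finset (Fin n))
    (hundec : ∃ i, 1 ≤ i ∧ i ≤ n ∧ isDec D i = false)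
    (k : ℕ) (hk1 : 1 ≤ k) (hk2 : k ≤ n + 1) :
    (n + 1 - aVal n (ent τ) (isDec D) < k →
        decCount (n + 1) (deltaDec n k (isDec D) (aVal n (ent τ) (isDec D)))
          = decCount n (isDec D) + 1) ∧
    (k ≤ n + 1 - aVal n (ent τ) (isDec D) →
        decCount (n + 1) (deltaDec n k (isDec D) (aVal n (ent τ) (isDec D)))
          = decCount n (isDec D)) ∧
    (k ≤ n + 1 - aVal n (ent τ) (isDec D) →
        aVal (n + 1) (shiftEnt n k (ent τ))
            (deltaDec n k (isDec D) (aVal n (ent τ) (isDec D))) = k) ∧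
    (n + 1 - aVal n (ent τ) (isDec D) < k →
        aVal (n + 1) (shiftEnt n k (ent τ))
            (deltaDec n k (isDec D) (aVal n (ent τ) (isDec D)))
          = k + aVal n (ent τ) (isDec D) - (n + 1)) := by
  obtain ⟨hp1, hpn, hpD, hplt⟩ := firstUndecPos_spec hundec
  set a := aVal n (ent τ) (isDec D) with ha
  have han : a ≤ n := ent_le τ _
  refine ⟨fun h => ?_, fun h => ?_, fun h => ?_, fun h => ?_⟩
  · rw [decCount_deltaDec, if_pos h, add_comm]
  · rw [decCount_deltaDec, if_neg (by omega), zero_add]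
  · have hpos : firstUndecPos (n + 1) (deltaDec n k (isDec D) a) = 1 :=
      firstUndecPos_eq le_rfl (by omega) (by simp [deltaDec]; omega) (fun i _ _ => by omega)
    have h0 : ent τ 0 = 0 := by simp [ent]
    rw [aVal, hpos, shiftEnt_succ hk1 hk2 (ent_le τ 0), h0, add_zero, if_pos hk2]
  · have hpos : firstUndecPos (n + 1) (deltaDec n k (isDec D) a)
        = firstUndecPos n (isDec D) + 1 := by
      refine firstUndecPos_eq (by omega) (by omega) ?_ fun i hi hlt => ?_
      · have : firstUndecPos n (isDec D) ≠ 0 := by omega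
        simpa [deltaDec, this] using hpD
      · rcases hi.eq_or_lt with rfl | hi
        · simpa [deltaDec] using h
        · have hi' := hplt (i - 1) (by omega) (by omega)
          rw [deltaDec, if_neg (by omega), if_neg (by omega), hi']
    have hval : ent τ (firstUndecPos n (isDec D)) = a := rfl
    rw [aVal, hpos, shiftEnt_succ hk1 hk2 (ent_le τ _), hval, if_neg (by omega)]
end

section
/- For every σ ∈ S_n, the map ψ defined on {1,…,n+1} by ψ(l) = inv3(η_l(σ)) − inv3(σ) is a bijection from {1,…,n+1} onto {0,1,…,n}. -/
/-!
Appending `l` to `σ` relabels the old letters by an order-preserving map fixing `0`, so the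
3-inversions inside the first `n` positions are unchanged (`inv3_etaEnt`), and `ψ(l)` counts the
3-inversions `(i, n+1)`.  Since the letters of `σ` are exactly `1,…,n`, this count is the length
of an interval of values (`card_ent_mem_Ico`).  For `n ≥ 1`, writing `a = σ_n` (and `σ_0 = 0`):

* if `σ_{n-1} < a`, then `ψ(l) = l - 1 - a` for `l > a` (double ascent, values `0,…,n-a`) and
  `ψ(l) = n + 1 - l` for `l ≤ a` (peak, values `n+1-a,…,n`);
* if `σ_{n-1} > a`, then `ψ(l) = a - l` for `l ≤ a` (double descent, values `0,…,a-1`) and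
  `ψ(l) = l - 1` for `l > a` (valley, values `a,…,n`).

In either case the two branches are injective and their images partition `{0,…,n}`.  For `n = 0`
the only value is `ψ(1) = 0`.
-/


open Finset

open QEuler

theorem ent_zero {n : ℕ} (σ : Equiv.Perm (Fin n)) : ent σ 0 = 0 := by
  simp [ent]

theorem ent_of_mem {n : ℕ} (σ : Equiv.Perm (Fin n)) {i : ℕ} (h : 1 ≤ i ∧ i ≤ n) :
    ent σ i = (σ ⟨i - 1, by omega⟩ : ℕ) + 1 := by
  simp only [ent, dif_pos h]

theorem ent_bounds {n : ℕ} (σ : Equiv.Perm (Fin n)) {i : ℕ} (h : 1 ≤ i ∧ i ≤ n) :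
    1 ≤ ent σ i ∧ ent σ i ≤ n := by
  rw [ent_of_mem σ h]
  have := (σ ⟨i - 1, by omega⟩).isLt
  omega

theorem ent_inj {n : ℕ} (σ : Equiv.Perm (Fin n)) {i j : ℕ} (hi : 1 ≤ i ∧ i ≤ n)
    (hj : 1 ≤ j ∧ j ≤ n) (h : ent σ i = ent σ j) : i = j := by
  rw [ent_of_mem σ hi, ent_of_mem σ hj] at h
  have h1 := σ.injective (Fin.ext (Nat.succ.inj h))
  have h2 := congrArg Fin.val h1
  simp only at h2
  omega

theorem ent_surj {n : ℕ} (σ : Equiv.Perm (Fin n)) {v : ℕ} (hv : 1 ≤ v ∧ v ≤ n) :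
    ∃ i, (1 ≤ i ∧ i ≤ n) ∧ ent σ i = v := by
  have hlt := (σ.symm ⟨v - 1, by omega⟩).isLt
  refine ⟨(σ.symm ⟨v - 1, by omega⟩ : ℕ) + 1, ⟨by omega, by omega⟩, ?_⟩
  rw [ent_of_mem σ ⟨by omega, by omega⟩]
  simp only [Nat.add_sub_cancel, Fin.eta, Equiv.apply_symm_apply]
  omega

/-- Each value in `{1,…,n}` is taken exactly once, so an interval `[p, q)` of values is taken
at exactly `q - p` positions. -/
theorem card_ent_mem_Ico {n : ℕ} (σ : Equiv.Perm (Fin n)) {p q : ℕ} (hp : 1 ≤ p)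
    (hq : q ≤ n + 1) :
    ((Finset.Icc 1 n).filter fun i => p ≤ ent σ i ∧ ent σ i < q).card = q - p := by
  rw [← Nat.card_Ico]
  refine Finset.card_bij (fun i _ => ent σ i) ?_ ?_ ?_
  · intro i hi
    simpa using (Finset.mem_filter.1 hi).2
  · intro i hi j hj h
    exact ent_inj σ (by simpa using (Finset.mem_filter.1 hi).1)
      (by simpa using (Finset.mem_filter.1 hj).1) h
  · intro v hv
    rw [Finset.mem_Ico] at hv
    obtain ⟨i, hi, rfl⟩ := ent_surj σ (v := v) (by omega)
    exact ⟨i, by simp only [Finset.mem_filter, Finset.mem_Icc]; exact ⟨hi, hv⟩, rfl⟩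

/-- On positions `0,…,n` the insertion is the relabelling `x ↦ x + 1` for `x ≥ l`; position `0`
is included because `l ≥ 1`. -/
theorem etaEnt_of_le {n l : ℕ} {E : ℕ → ℕ} (hl : 1 ≤ l) (h0 : E 0 = 0) {i : ℕ} (hi : i ≤ n) :
    etaEnt n l E i = if l ≤ E i then E i + 1 else E i := by
  unfold etaEnt
  rcases Nat.eq_zero_or_pos i with rfl | hpos
  · simp [h0]; omega
  · rw [if_neg (by omega), if_pos ⟨hpos, hi⟩]

theorem etaEnt_last (n l : ℕ) (E : ℕ → ℕ) : etaEnt n l E (n + 1) = l := by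
  simp [etaEnt]

theorem etaEnt_lt_iff {n l : ℕ} {E : ℕ → ℕ} (hl : 1 ≤ l) (h0 : E 0 = 0) {i j : ℕ}
    (hi : i ≤ n) (hj : j ≤ n) : etaEnt n l E i < etaEnt n l E j ↔ E i < E j := by
  rw [etaEnt_of_le hl h0 hi, etaEnt_of_le hl h0 hj]
  split_ifs <;> omega

theorem inv3Pair_etaEnt {n l : ℕ} {E : ℕ → ℕ} (hl : 1 ≤ l) (h0 : E 0 = 0) {i j : ℕ}
    (hi : i ≤ n) (hj : j ≤ n) : Inv3Pair (etaEnt n l E) i j ↔ Inv3Pair E i j := by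
  have h1 : j - 1 ≤ n := by omega
  have h2 : j - 2 ≤ n := by omega
  simp only [Inv3Pair, DblAsc, DblDesc, IsPeak, IsValley, etaEnt_lt_iff hl h0 hi hj,
    etaEnt_lt_iff hl h0 hj hi, etaEnt_lt_iff hl h0 h1 hj, etaEnt_lt_iff hl h0 hj h1,
    etaEnt_lt_iff hl h0 h1 h2, etaEnt_lt_iff hl h0 h2 h1, etaEnt_lt_iff hl h0 hi h1,
    etaEnt_lt_iff hl h0 h1 hi]

/-- The 3-inversions of `η_l(σ)` are those of `σ` together with those ending at the new letter. -/
theorem inv3_etaEnt {n l : ℕ} {E : ℕ → ℕ} (hl : 1 ≤ l) (h0 : E 0 = 0) :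
    inv3 (n + 1) (etaEnt n l E) = inv3 n E +
      ((Finset.Icc 1 n).filter fun i => Inv3Pair (etaEnt n l E) i (n + 1)).card := by
  have hinj : Function.Injective fun i : ℕ => (i, n + 1) := fun a b h => (Prod.mk.inj h).1
  unfold inv3
  rw [← Finset.card_image_of_injective _ hinj, ← Finset.card_union_of_disjoint]
  · congr 1
    ext ⟨i, j⟩
    simp only [Finset.mem_filter, Finset.mem_product, Finset.mem_Icc, Finset.mem_union,
      Finset.mem_image, Prod.mk.injEq]
    constructor
    · rintro ⟨⟨⟨hi1, hi2⟩, hj1, hj2⟩, hij, hP⟩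
      rcases Nat.lt_or_ge n j with hj | hj
      · obtain rfl : j = n + 1 := by omega
        exact Or.inr ⟨i, ⟨⟨hi1, by omega⟩, hP⟩, rfl, rfl⟩
      · exact Or.inl ⟨⟨⟨hi1, by omega⟩, hj1, hj⟩, hij,
          (inv3Pair_etaEnt hl h0 (by omega) hj).1 hP⟩
    · rintro (⟨⟨⟨hi1, hi2⟩, hj1, hj2⟩, hij, hP⟩ | ⟨i', ⟨⟨hi1, hi2⟩, hP⟩, rfl, rfl⟩)
      · exact ⟨⟨⟨hi1, by omega⟩, hj1, by omega⟩, hij, (inv3Pair_etaEnt hl h0 hi2 hj2).2 hP⟩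
      · exact ⟨⟨⟨hi1, by omega⟩, by omega, le_rfl⟩, by omega, hP⟩
  · rw [Finset.disjoint_left]
    rintro ⟨i, j⟩ h1 h2
    simp only [Finset.mem_filter, Finset.mem_product, Finset.mem_Icc, Finset.mem_image,
      Prod.mk.injEq] at h1 h2
    obtain ⟨_, _, _, rfl⟩ := h2
    omega

/-- In terms of the letters of `σ`, the pair `(i, n+1)` is a 3-inversion of `η_l(σ)` iff `σ_i`
lies in an interval depending only on `l` and on the shape of `σ` at its last two letters. -/
theorem inv3Pair_last {n l : ℕ} {E : ℕ → ℕ} (hl : 1 ≤ l) (h0 : E 0 = 0) {i : ℕ} (hi : i ≤ n) :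
    Inv3Pair (etaEnt n l E) i (n + 1) ↔
      (E (n - 1) < E n ∧ E n < l ∧ E n < E i ∧ E i < l) ∨
      (E n < E (n - 1) ∧ l ≤ E n ∧ l ≤ E i ∧ E i < E n) ∨
      (E (n - 1) < E n ∧ l ≤ E n ∧ l ≤ E i) ∨
      (E n < E (n - 1) ∧ E n < l ∧ E i < l) := by
  have e1 : n + 1 - 1 = n := rfl
  have e2 : n + 1 - 2 = n - 1 := by omega
  have h1 : n - 1 ≤ n := Nat.sub_le _ _
  simp only [Inv3Pair, DblAsc, DblDesc, IsPeak, IsValley, etaEnt_last, e1, e2,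
    etaEnt_lt_iff hl h0 h1 le_rfl, etaEnt_lt_iff hl h0 le_rfl h1,
    etaEnt_lt_iff hl h0 hi le_rfl, etaEnt_lt_iff hl h0 le_rfl hi]
  rw [etaEnt_of_le hl h0 hi, etaEnt_of_le hl h0 le_rfl]
  split_ifs <;> omega

/-- The closed form of `ψ(l)`. -/
theorem card_inv3Pair_last {n : ℕ} (hn : 1 ≤ n) (σ : Equiv.Perm (Fin n)) {l : ℕ} (hl : 1 ≤ l)
    (hl' : l ≤ n + 1) :
    ((Finset.Icc 1 n).filter fun i => Inv3Pair (etaEnt n l (ent σ)) i (n + 1)).card =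
      if ent σ (n - 1) < ent σ n then
        if ent σ n < l then l - (ent σ n + 1) else n + 1 - l
      else
        if ent σ n < l then l - 1 else ent σ n - l := by
  have hb := ent_bounds σ ⟨hn, le_refl n⟩
  have hne : ent σ (n - 1) ≠ ent σ n := by
    rcases Nat.eq_or_lt_of_le hn with rfl | h
    · have h0 : ent σ (1 - 1) = 0 := ent_zero σ
      omega
    · intro h'
      have := ent_inj σ ⟨by omega, by omega⟩ ⟨hn, le_refl n⟩ h'
      omega
  -- Rewriting the filter as an interval of values reduces each case to `card_ent_mem_Ico`.
  have key : ∀ p q : ℕ, 1 ≤ p → q ≤ n + 1 →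
      (∀ i, 1 ≤ i ∧ i ≤ n → (Inv3Pair (etaEnt n l (ent σ)) i (n + 1) ↔
        p ≤ ent σ i ∧ ent σ i < q)) →
      ((Finset.Icc 1 n).filter fun i => Inv3Pair (etaEnt n l (ent σ)) i (n + 1)).card = q - p := by
    intro p q hp hq h
    rw [← card_ent_mem_Ico σ hp hq]
    congr 1
    exact Finset.filter_congr fun i hi => h i (Finset.mem_Icc.1 hi)
  split_ifs with h1 h2 h2
  all_goals
    refine key _ _ (by omega) (by omega) fun i hi => ?_
    have hbi := ent_bounds σ hi
    rw [inv3Pair_last hl (ent_zero σ) hi.2]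
    omega

/-- For every `σ ∈ S_n`, the map
`ψ(l) = inv3(η_l(σ)) − inv3(σ)` is a bijection from `{1,…,n+1}` onto `{0,1,…,n}`. -/
theorem psi_bijection {n : ℕ} (σ : Equiv.Perm (Fin n)) :
    Set.BijOn
      (fun l : ℕ => (inv3 (n + 1) (etaEnt n l (ent σ)) : ℤ) - (inv3 n (ent σ) : ℤ))
      (Set.Icc 1 (n + 1)) (Set.Icc (0 : ℤ) (n : ℤ)) := by
  have hcongr : Set.EqOn
      (fun l : ℕ => ((((Finset.Icc 1 n).filter fun i =>
        Inv3Pair (etaEnt n l (ent σ)) i (n + 1)).card : ℕ) : ℤ))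
      (fun l : ℕ => (inv3 (n + 1) (etaEnt n l (ent σ)) : ℤ) - (inv3 n (ent σ) : ℤ))
      (Set.Icc 1 (n + 1)) := by
    intro l hl
    simp only [inv3_etaEnt hl.1 (ent_zero σ)]
    push_cast
    ring
  refine Set.BijOn.congr ?_ hcongr
  rcases Nat.eq_zero_or_pos n with rfl | hn
  · refine ⟨?_, ?_, ?_⟩
    · intro l _
      simp
    · intro l hl m hm _
      simp only [Set.mem_Icc] at hl hm
      omega
    · intro k hk
      simp only [Set.mem_Icc] at hk
      refine ⟨1, by simp, ?_⟩
      simp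
      omega
  have hb := ent_bounds σ ⟨hn, le_refl n⟩
  have hcard := fun {l : ℕ} (hl : l ∈ Set.Icc 1 (n + 1)) => card_inv3Pair_last hn σ hl.1 hl.2
  refine ⟨?_, ?_, ?_⟩
  · intro l hl
    simp only [hcard hl, Set.mem_Icc] at hl ⊢
    split_ifs <;> omega
  · intro l hl m hm h
    simp only [hcard hl, hcard hm, Set.mem_Icc] at hl hm h
    split_ifs at h <;> omega
  · intro k hk
    lift k to ℕ using hk.1
    simp only [Set.mem_Icc] at hk
    -- The preimage is found by inverting whichever branch of the closed form takes the value `k`.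
    have hex : ∃ l, l ∈ Set.Icc 1 (n + 1) ∧
        (if ent σ (n - 1) < ent σ n then
          if ent σ n < l then l - (ent σ n + 1) else n + 1 - l
        else
          if ent σ n < l then l - 1 else ent σ n - l) = k := by
      simp only [Set.mem_Icc]
      by_cases h1 : ent σ (n - 1) < ent σ n
      · simp only [if_pos h1]
        rcases Nat.lt_or_ge (n - ent σ n) k with h2 | h2
        · exact ⟨n + 1 - k, by omega, by split_ifs <;> omega⟩
        · exact ⟨k + ent σ n + 1, by omega, by split_ifs <;> omega⟩
      · simp only [if_neg h1]
        rcases Nat.lt_or_ge k (ent σ n) with h2 | h2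
        · exact ⟨ent σ n - k, by omega, by split_ifs <;> omega⟩
        · exact ⟨k + 1, by omega, by split_ifs <;> omega⟩
    obtain ⟨l, hl, h⟩ := hex
    exact ⟨l, hl, by simp only [hcard hl, h]⟩
end
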